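/- Let a < b be real numbers and 1 ≤ p ≤ ∞. The differential operator d/dx is chaotic in the sense of Devaney on (C^∞([a,b]), ρ_p): the set of periodic points of d/dx is dense in (C^∞([a,b]), ρ_p), and d/dx is topologically transitive on (C^∞([a,b]), ρ_p). -/

import Mathlib

open MeasureTheory Set Filter
open scoped ENNReal Topology

/-- The `L^p` distance of two functions over the interval `[a, b]`. -/
noncomputable def rho (a b : ℝ) (p : ℝ≥0∞) (f g : ℝ → ℝ) : ℝ :=
  (eLpNorm (fun x => f x - g x) p (volume.restrict (Icc a b))).toReal

/-!
Send a bounded sequence `c` to its exponential generating function `∑ cₙ xⁿ / n!`. Under this map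
`d/dx` becomes the shift of sequences, and two sequences with the same long initial segment and the
same bound have uniformly close images on a compact set. The images include all polynomials, so
they are uniformly dense in `C([a, b])`. The chaotic behaviour of the shift is therefore inherited:
repeating an initial segment of `c` gives a periodic point near `c`, and following an initial
segment of `c` by `d` gives a point near `c` that is shifted onto `d`.
-/

section ExponentialGeneratingFunction

open scoped Nat

variable {𝕜 F : Type*} [RCLike 𝕜] [NormedAddCommGroup F] [NormedSpace 𝕜 F]
  {c d : ℕ → F} {M R : ℝ} {n : ℕ} {x : 𝕜}

/-- The exponential generating function `x ↦ ∑ cₙ xⁿ / n!` of the sequence `c`, conjugating the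
shift of bounded sequences to differentiation. The sum is the junk value `0` where the series
is not summable, which does not happen for bounded `c` in a complete space. -/
noncomputable def egf (c : ℕ → F) (x : 𝕜) : F :=
  ∑' n : ℕ, (x ^ n / n ! : 𝕜) • c n

lemma norm_pow_div_factorial_smul_le (hc : ∀ i, ‖c i‖ ≤ M) (hx : ‖x‖ ≤ R) (n : ℕ) :
    ‖(x ^ n / n ! : 𝕜) • c n‖ ≤ R ^ n / n ! * M := by
  have hR : 0 ≤ R := (norm_nonneg x).trans hx
  rw [norm_smul, norm_div, norm_pow, RCLike.norm_natCast]
  gcongr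
  exact hc n

variable [CompleteSpace F]

lemma summable_pow_div_factorial_smul (hc : ∀ i, ‖c i‖ ≤ M) (x : 𝕜) :
    Summable fun n : ℕ => (x ^ n / n ! : 𝕜) • c n :=
  .of_norm_bounded ((Real.summable_pow_div_factorial ‖x‖).mul_right M)
    (norm_pow_div_factorial_smul_le hc le_rfl)

lemma egf_sub {N : ℝ} (hc : ∀ i, ‖c i‖ ≤ M) (hd : ∀ i, ‖d i‖ ≤ N) (x : 𝕜) :
    egf (fun i => c i - d i) x = egf c x - egf d x := by
  simp only [egf, smul_sub]
  exact (summable_pow_div_factorial_smul hc x).tsum_sub (summable_pow_div_factorial_smul hd x)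

lemma norm_egf_le_of_forall_lt_eq_zero (hc : ∀ i, ‖c i‖ ≤ M)
    (hn : ∀ i < n, c i = 0) (hx : ‖x‖ ≤ R) :
    ‖egf c x‖ ≤ ∑' k : ℕ, R ^ (k + n) / (k + n)! * M := by
  have hhead : ∑ i ∈ Finset.range n, (x ^ i / i ! : 𝕜) • c i = 0 :=
    Finset.sum_eq_zero fun i hi => by rw [hn i (Finset.mem_range.1 hi), smul_zero]
  rw [egf, ← (summable_pow_div_factorial_smul hc x).sum_add_tsum_nat_add n, hhead, zero_add]
  have hmajorant := (summable_nat_add_iff n).2 ((Real.summable_pow_div_factorial R).mul_right M)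
  exact tsum_of_norm_bounded hmajorant.hasSum
    fun k => norm_pow_div_factorial_smul_le hc hx (k + n)

lemma eventually_norm_egf_sub_lt (M R : ℝ) {ε : ℝ} (hε : 0 < ε) :
    ∀ᶠ n in atTop, ∀ c d : ℕ → F, (∀ i, ‖c i‖ ≤ M) → (∀ i, ‖d i‖ ≤ M) → (∀ i < n, c i = d i) →
      ∀ x : 𝕜, ‖x‖ ≤ R → ‖egf c x - egf d x‖ < ε := by
  have htail := tendsto_sum_nat_add fun i : ℕ => R ^ i / i ! * (M + M)
  filter_upwards [htail.eventually_lt_const hε] with n hn c d hc hd hcd x hx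
  rw [← egf_sub hc hd]
  have hbound : ∀ i, ‖c i - d i‖ ≤ M + M :=
    fun i => (norm_sub_le _ _).trans (add_le_add (hc i) (hd i))
  exact (norm_egf_le_of_forall_lt_eq_zero hbound (fun i hi => sub_eq_zero.2 (hcd i hi)) hx).trans_lt
    hn

lemma hasDerivAt_pow_succ_div_factorial (n : ℕ) (x : 𝕜) :
    HasDerivAt (fun y : 𝕜 => y ^ (n + 1) / (n + 1)!) (x ^ n / n !) x := by
  have hn : (n ! : 𝕜) ≠ 0 := by exact_mod_cast n.factorial_ne_zero
  have hn' : (n + 1 : 𝕜) ≠ 0 := by exact_mod_cast n.succ_ne_zero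
  refine ((hasDerivAt_pow (n + 1) x).div_const _).congr_deriv ?_
  rw [Nat.factorial_succ, Nat.add_sub_cancel]
  push_cast
  field_simp

lemma egf_eq_add_tsum_succ (hc : ∀ i, ‖c i‖ ≤ M) (x : 𝕜) :
    egf c x = c 0 + ∑' n : ℕ, (x ^ (n + 1) / (n + 1)! : 𝕜) • c (n + 1) := by
  rw [egf, (summable_pow_div_factorial_smul hc x).tsum_eq_zero_add]
  simp

lemma hasDerivAt_egf (hc : ∀ i, ‖c i‖ ≤ M) (x : 𝕜) :
    HasDerivAt (egf c) (egf (fun i => c (i + 1)) x) x := by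
  obtain ⟨R, hxR⟩ := exists_gt ‖x‖
  have hseries : HasDerivAt (fun y : 𝕜 => ∑' n : ℕ, (y ^ (n + 1) / (n + 1)! : 𝕜) • c (n + 1))
      (egf (fun i => c (i + 1)) x) x := by
    refine hasDerivAt_tsum_of_isPreconnected ((Real.summable_pow_div_factorial R).mul_right M)
      Metric.isOpen_ball (convex_ball (0 : 𝕜) R).isPreconnected
      (fun n y _ => (hasDerivAt_pow_succ_div_factorial n y).smul_const _) (fun n y hy => ?_)
      (mem_ball_zero_iff.2 hxR) ?_ (mem_ball_zero_iff.2 hxR)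
    · exact norm_pow_div_factorial_smul_le (fun i => hc (i + 1)) (mem_ball_zero_iff.1 hy).le n
    · exact (summable_nat_add_iff 1).2 (summable_pow_div_factorial_smul hc x)
  rw [funext (egf_eq_add_tsum_succ hc)]
  exact hseries.const_add (c 0)

lemma deriv_iterate_egf (hc : ∀ i, ‖c i‖ ≤ M) (n : ℕ) :
    deriv^[n] (egf c : 𝕜 → F) = egf fun i => c (i + n) := by
  induction n with
  | zero => rfl
  | succ n ih =>
    rw [Function.iterate_succ_apply', ih]
    funext x
    rw [(hasDerivAt_egf (fun i => hc (i + n)) x).deriv]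
    simp only [add_assoc, add_comm 1 n]

lemma contDiff_egf (hc : ∀ i, ‖c i‖ ≤ M) : ContDiff 𝕜 (⊤ : ℕ∞) (egf c : 𝕜 → F) := by
  refine contDiff_of_differentiable_iteratedDeriv fun n _ => ?_
  rw [iteratedDeriv_eq_iterate, deriv_iterate_egf hc]
  exact fun x => (hasDerivAt_egf (fun i => hc (i + n)) x).differentiableAt

end ExponentialGeneratingFunction

section Polynomial

open Polynomial
open scoped Nat

variable {𝕜 : Type*} [RCLike 𝕜]

lemma egf_factorial_mul_coeff (P : 𝕜[X]) (x : 𝕜) :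
    egf (fun n => (n ! : 𝕜) * P.coeff n) x = P.eval x := by
  have hterm (n : ℕ) : (x ^ n / n ! : 𝕜) • ((n ! : 𝕜) * P.coeff n) = P.coeff n * x ^ n := by
    have : (n ! : 𝕜) ≠ 0 := by exact_mod_cast n.factorial_ne_zero
    rw [smul_eq_mul]
    field_simp
  simp only [egf, hterm]
  rw [eval_eq_sum_range, tsum_eq_sum]
  intro n hn
  rw [coeff_eq_zero_of_natDegree_lt (by simpa using hn), zero_mul]

lemma exists_norm_factorial_mul_coeff_le (P : 𝕜[X]) :
    ∃ M : ℝ, ∀ n : ℕ, ‖(n ! : 𝕜) * P.coeff n‖ ≤ M := by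
  refine ⟨∑ i ∈ P.support, ‖(i ! : 𝕜) * P.coeff i‖, fun n => ?_⟩
  by_cases hn : n ∈ P.support
  · exact Finset.single_le_sum (f := fun i => ‖(i ! : 𝕜) * P.coeff i‖)
      (fun i _ => norm_nonneg _) hn
  · rw [notMem_support_iff.1 hn, mul_zero, norm_zero]
    positivity

end Polynomial

section UniformApproximation

variable {a b ε : ℝ} {f g : ℝ → ℝ}

lemma exists_egf_near_of_continuousOn (hf : ContinuousOn f (Icc a b)) (hε : 0 < ε) :
    ∃ (c : ℕ → ℝ) (M : ℝ), (∀ i, ‖c i‖ ≤ M) ∧ ∀ x ∈ Icc a b, |f x - egf c x| < ε := by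
  obtain ⟨P, hP⟩ := exists_polynomial_near_of_continuousOn a b f hf ε hε
  obtain ⟨M, hM⟩ := exists_norm_factorial_mul_coeff_le P
  refine ⟨_, M, hM, fun x hx => ?_⟩
  rw [egf_factorial_mul_coeff, abs_sub_comm]
  exact hP x hx

lemma eventually_abs_egf_sub_lt (a b M : ℝ) (hε : 0 < ε) :
    ∀ᶠ n in atTop, ∀ c d : ℕ → ℝ, (∀ i, ‖c i‖ ≤ M) → (∀ i, ‖d i‖ ≤ M) → (∀ i < n, c i = d i) →
      ∀ x ∈ Icc a b, |egf c x - egf d x| < ε := by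
  filter_upwards [eventually_norm_egf_sub_lt (𝕜 := ℝ) (F := ℝ) M (max |a| |b|) hε]
    with n hn c d hc hd hcd x hx
  exact hn c d hc hd hcd x (abs_le_max_abs_abs hx.1 hx.2)

lemma eventually_exists_deriv_iterate_eq_self_near (hf : ContinuousOn f (Icc a b)) (hε : 0 < ε) :
    ∀ᶠ n in atTop, ∃ g : ℝ → ℝ, ContDiff ℝ (⊤ : ℕ∞) g ∧ deriv^[n] g = g ∧
      ∀ x ∈ Icc a b, |f x - g x| < ε := by
  obtain ⟨c, M, hc, hfc⟩ := exists_egf_near_of_continuousOn hf (half_pos hε)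
  filter_upwards [eventually_abs_egf_sub_lt a b M (half_pos hε)] with n hn
  have hper : ∀ i, ‖c (i % n)‖ ≤ M := fun i => hc (i % n)
  refine ⟨egf fun i => c (i % n), contDiff_egf hper, ?_, fun x hx => ?_⟩
  · simp only [deriv_iterate_egf hper, Nat.add_mod_right]
  · have hclose : |egf c x - egf (fun i => c (i % n)) x| < ε / 2 :=
      hn c _ hc hper (fun i hi => by rw [Nat.mod_eq_of_lt hi]) x hx
    linarith [abs_sub_le (f x) (egf c x) (egf (fun i => c (i % n)) x), hfc x hx]

lemma eventually_exists_near_deriv_iterate_near (hf : ContinuousOn f (Icc a b))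
    (hg : ContinuousOn g (Icc a b)) (hε : 0 < ε) :
    ∀ᶠ n in atTop, ∃ h : ℝ → ℝ, ContDiff ℝ (⊤ : ℕ∞) h ∧
      (∀ x ∈ Icc a b, |f x - h x| < ε) ∧ ∀ x ∈ Icc a b, |deriv^[n] h x - g x| < ε := by
  obtain ⟨c, M, hc, hfc⟩ := exists_egf_near_of_continuousOn hf (half_pos hε)
  obtain ⟨d, N, hd, hgd⟩ := exists_egf_near_of_continuousOn hg hε
  have hc' : ∀ i, ‖c i‖ ≤ max M N := fun i => (hc i).trans (le_max_left M N)
  have hd' : ∀ i, ‖d i‖ ≤ max M N := fun i => (hd i).trans (le_max_right M N)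
  filter_upwards [eventually_abs_egf_sub_lt a b (max M N) (half_pos hε)] with n hn
  set e : ℕ → ℝ := fun i => if i < n then c i else d (i - n) with he
  have hbound : ∀ i, ‖e i‖ ≤ max M N := fun i => by
    simp only [he]
    split_ifs
    exacts [hc' i, hd' (i - n)]
  have hshift : (fun i => e (i + n)) = d := funext fun i => by simp [he]
  refine ⟨egf e, contDiff_egf hbound, fun x hx => ?_, fun x hx => ?_⟩
  · have hclose : |egf c x - egf e x| < ε / 2 :=
      hn c e hc' hbound (fun i hi => (if_pos hi).symm) x hx
    linarith [abs_sub_le (f x) (egf c x) (egf e x), hfc x hx]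
  · rw [deriv_iterate_egf hbound, hshift, abs_sub_comm]
    exact hgd x hx

end UniformApproximation

lemma rho_le_of_abs_sub_le {a b η : ℝ} {f g : ℝ → ℝ} (p : ℝ≥0∞) (hη : 0 ≤ η)
    (h : ∀ x ∈ Icc a b, |f x - g x| ≤ η) :
    rho a b p f g ≤ (volume (Icc a b) ^ p.toReal⁻¹).toReal * η := by
  have hvol : volume (Icc a b) ^ p.toReal⁻¹ ≠ ∞ :=
    ENNReal.rpow_ne_top_of_nonneg (by positivity) measure_Icc_lt_top.ne
  have hnorm : eLpNorm (fun x => f x - g x) p (volume.restrict (Icc a b)) ≤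
      volume (Icc a b) ^ p.toReal⁻¹ * ENNReal.ofReal η := by
    rw [← Measure.restrict_apply_univ (Icc a b)]
    exact eLpNorm_le_of_ae_bound ((ae_restrict_iff' measurableSet_Icc).2 (.of_forall h))
  have := ENNReal.toReal_mono (ENNReal.mul_ne_top hvol ENNReal.ofReal_ne_top) hnorm
  rwa [ENNReal.toReal_mul, ENNReal.toReal_ofReal hη] at this

lemma exists_pos_forall_abs_sub_lt_rho_lt (a b : ℝ) (p : ℝ≥0∞) {ε : ℝ} (hε : 0 < ε) :
    ∃ η > 0, ∀ f g : ℝ → ℝ, (∀ x ∈ Icc a b, |f x - g x| < η) → rho a b p f g < ε := by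
  obtain ⟨η, hη, hηε⟩ := exists_pos_mul_lt hε (volume (Icc a b) ^ p.toReal⁻¹).toReal
  exact ⟨η, hη, fun f g h => (rho_le_of_abs_sub_le p hη.le fun x hx => (h x hx).le).trans_lt hηε⟩

theorem stmt8_general (a b : ℝ) (p : ℝ≥0∞) :
    (∀ f : ℝ → ℝ, ContinuousOn f (Icc a b) → ∀ ε > (0 : ℝ),
      ∃ g : ℝ → ℝ, ContDiff ℝ (⊤ : ℕ∞) g ∧
        (∃ m : ℕ, 1 ≤ m ∧ Set.EqOn (deriv^[m] g) g (Icc a b)) ∧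
        rho a b p f g < ε) ∧
    (∀ f : ℝ → ℝ, ContinuousOn f (Icc a b) → ∀ g : ℝ → ℝ, ContinuousOn g (Icc a b) →
      ∀ ε > (0 : ℝ), ∃ h : ℝ → ℝ, ContDiff ℝ (⊤ : ℕ∞) h ∧ ∃ n : ℕ,
        rho a b p f h < ε ∧ rho a b p (deriv^[n] h) g < ε) := by
  refine ⟨fun f hf ε hε => ?_, fun f hf g hg ε hε => ?_⟩
  all_goals obtain ⟨η, hη, hrho⟩ := exists_pos_forall_abs_sub_lt_rho_lt a b p hε
  · obtain ⟨m, ⟨g, hg, hper, hfg⟩, hm⟩ :=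
      ((eventually_exists_deriv_iterate_eq_self_near hf hη).and (eventually_ge_atTop 1)).exists
    exact ⟨g, hg, ⟨m, hm, fun x _ => congrFun hper x⟩, hrho f g hfg⟩
  · obtain ⟨n, h, hh, hfh, hhg⟩ := (eventually_exists_near_deriv_iterate_near hf hg hη).exists
    exact ⟨h, hh, n, hrho f h hfh, hrho _ g hhg⟩

/-- Let `a < b` and `1 ≤ p ≤ ∞`. The differential operator `d/dx` is
Devaney chaotic on `(C^∞([a, b]), ρ_p)`: its periodic points are dense, and it is
topologically transitive (expressed in the equivalent ε-form for metric spaces). -/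
theorem stmt8 (a b : ℝ) (hab : a < b) (p : ℝ≥0∞) (hp : 1 ≤ p) :
    (∀ f : ℝ → ℝ, ContDiff ℝ (⊤ : ℕ∞) f → ∀ ε > (0 : ℝ),
      ∃ g : ℝ → ℝ, ContDiff ℝ (⊤ : ℕ∞) g ∧
        (∃ m : ℕ, 1 ≤ m ∧ Set.EqOn (deriv^[m] g) g (Icc a b)) ∧
        rho a b p f g < ε) ∧
    (∀ f : ℝ → ℝ, ContDiff ℝ (⊤ : ℕ∞) f → ∀ g : ℝ → ℝ, ContDiff ℝ (⊤ : ℕ∞) g →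
      ∀ ε > (0 : ℝ), ∃ h : ℝ → ℝ, ContDiff ℝ (⊤ : ℕ∞) h ∧ ∃ n : ℕ,
        rho a b p f h < ε ∧ rho a b p (deriv^[n] h) g < ε) :=
  (stmt8_general a b p).imp (fun hper f hf => hper f hf.continuous.continuousOn)
    fun htrans f hf g hg => htrans f hf.continuous.continuousOn g hg.continuous.continuousOn
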